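/- Let (X,f) be a TDS with ψ ∈ C(X,ℝ), ψ > 0, and let m = min ψ, M = ‖ψ‖. Then P_ψ(0) = dim_BS X, i.e., the ψ-induced topological pressure of the zero function equals the Barreira–Schmeling dimension of X with respect to ψ. -/

import Mathlib

open MeasureTheory Filter Topology Set

variable {X : Type*}

/-- Birkhoff sum `S_n φ (x) = ∑_{i<n} φ(f^i x)`. -/
noncomputable def birkhoff (f : X → X) (φ : X → ℝ) (n : ℕ) (x : X) : ℝ :=
  ∑ i ∈ Finset.range n, φ (f^[i] x)

/-- The `n`-th Bowen metric. -/
noncomputable def dynDist [MetricSpace X] (f : X → X) (n : ℕ) (x y : X) : ℝ :=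
  ⨆ i : Fin n, dist (f^[(i : ℕ)] x) (f^[(i : ℕ)] y)

/-- `F` is an `(n,ε)`-spanning set of `Z`. -/
def IsSpanningSet [MetricSpace X] (f : X → X) (n : ℕ) (ε : ℝ) (Z : Set X) (F : Finset X) : Prop :=
  ∀ y ∈ Z, ∃ x ∈ F, dynDist f n x y ≤ ε

/-- `E` is `(n,ε)`-separated. -/
def IsSeparatedSet [MetricSpace X] (f : X → X) (n : ℕ) (ε : ℝ) (E : Finset X) : Prop :=
  ∀ x ∈ E, ∀ y ∈ E, x ≠ y → ε < dynDist f n x y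

/-- `S_T = {n : ∃ x, S_n ψ(x) ≤ T < S_{n+1} ψ(x)}`. -/
def STset (f : X → X) (ψ : X → ℝ) (T : ℝ) : Set ℕ :=
  {n | ∃ x : X, birkhoff f ψ n x ≤ T ∧ T < birkhoff f ψ (n + 1) x}

/-- `X_n = {x : S_n ψ(x) ≤ T < S_{n+1} ψ(x)}`. -/
def Xset (f : X → X) (ψ : X → ℝ) (T : ℝ) (n : ℕ) : Set X :=
  {x | birkhoff f ψ n x ≤ T ∧ T < birkhoff f ψ (n + 1) x}

/-- `Q_{ψ,T}(f,φ,ε)`, the spanning-set quantity. -/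
noncomputable def Qspan [MetricSpace X] (f : X → X) (φ ψ : X → ℝ) (T ε : ℝ) : ℝ :=
  sInf { r : ℝ | ∃ F : ℕ → Finset X,
    (∀ n ∈ STset f ψ T, IsSpanningSet f n ε (Xset f ψ T n) (F n)) ∧
    r = ∑' n : ℕ, Set.indicator (STset f ψ T)
        (fun n => ∑ x ∈ F n, Real.exp (birkhoff f φ n x)) n }

/-- `P_{ψ,T}(f,φ,ε)`, the separated-set quantity. -/
noncomputable def Psep [MetricSpace X] (f : X → X) (φ ψ : X → ℝ) (T ε : ℝ) : ℝ :=
  sSup { r : ℝ | ∃ E : ℕ → Finset X,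
    (∀ n ∈ STset f ψ T, (E n : Set X) ⊆ Xset f ψ T n ∧ IsSeparatedSet f n ε (E n)) ∧
    r = ∑' n : ℕ, Set.indicator (STset f ψ T)
        (fun n => ∑ x ∈ E n, Real.exp (birkhoff f φ n x)) n }

/-- The `ψ`-induced topological pressure of `φ`. -/
noncomputable def inducedPressure [MetricSpace X] (f : X → X) (φ ψ : X → ℝ) : EReal :=
  ⨆ (ε : ℝ) (_ : 0 < ε),
    Filter.limsup (fun T : ℝ => ((T⁻¹ * Real.log (Qspan f φ ψ T ε) : ℝ) : EReal)) atTop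

/-- Largest sum over `(n,ε)`-separated sets of `X`. -/
noncomputable def sepSum [MetricSpace X] (f : X → X) (φ : X → ℝ) (n : ℕ) (ε : ℝ) : ℝ :=
  sSup { r : ℝ | ∃ E : Finset X, IsSeparatedSet f n ε E ∧
    r = ∑ x ∈ E, Real.exp (birkhoff f φ n x) }

/-- The classical (Walters) topological pressure. -/
noncomputable def topPressure [MetricSpace X] (f : X → X) (φ : X → ℝ) : EReal :=
  ⨆ (ε : ℝ) (_ : 0 < ε),
    Filter.limsup (fun n : ℕ => (((n : ℝ)⁻¹ * Real.log (sepSum f φ n ε) : ℝ) : EReal)) atTop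

/-- Open Bowen ball of order `n` and radius `ε`. -/
def BowenBall [MetricSpace X] (f : X → X) (n : ℕ) (x : X) (ε : ℝ) : Set X :=
  {y | dynDist f n x y < ε}

/-- `M(α,ε,N)`: Barreira–Schmeling outer-measure approximation, the infimum over finite
covers of `X` by Bowen balls of order `≥ N` of `∑_B exp(-α ψ(B))`, where
`ψ(B) = sup_{y ∈ B} S_nψ(y)`. A cover is encoded as a finite set of pairs `(n, x)`. -/
noncomputable def BSpre [MetricSpace X] (f : X → X) (ψ : X → ℝ) (α ε : ℝ) (N : ℕ) : ENNReal :=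
  ⨅ (G : Finset (ℕ × X))
    (_ : (∀ p ∈ G, N ≤ p.1) ∧ Set.univ ⊆ ⋃ p ∈ G, BowenBall f p.1 p.2 ε),
    ∑ p ∈ G, ENNReal.ofReal
      (Real.exp (-α * sSup (birkhoff f ψ p.1 '' BowenBall f p.1 p.2 ε)))

/-- `m(α,ε) = lim_{N→∞} M(α,ε,N)` (the approximations increase in `N`). -/
noncomputable def BSm [MetricSpace X] (f : X → X) (ψ : X → ℝ) (α ε : ℝ) : ENNReal :=
  ⨆ N : ℕ, BSpre f ψ α ε N

/-- `dim_BS(X,ε) = inf {α : m(α,ε) = 0}`. -/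
noncomputable def BSdimAt [MetricSpace X] (f : X → X) (ψ : X → ℝ) (ε : ℝ) : ℝ :=
  sInf {α : ℝ | BSm f ψ α ε = 0}

/-- The Barreira–Schmeling dimension `dim_BS X = lim_{ε→0} dim_BS(X,ε)`
(the quantity increases as `ε` decreases). -/
noncomputable def BSdim [MetricSpace X] (f : X → X) (ψ : X → ℝ) : EReal :=
  ⨆ (ε : ℝ) (_ : 0 < ε), ((BSdimAt f ψ ε : ℝ) : EReal)

/-! Suppose finitely many Bowen balls `B` of radius `ε` cover `X` and `∑ exp (-α ψ(B)) ≤ 1`. Cutting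
orbits into segments that follow these balls covers `{S_n ψ ≤ T}` by about `exp (α T)` sets of small
Bowen diameter, up to a factor governed by the oscillation of `ψ` at scale `2 ε`. Only the orders
`n ≤ T / min ψ` occur in `Q_{ψ,T}`, so its exponential growth rate in `T` is at most `α`, up to an
error that vanishes as `ε → 0`. Conversely, spanning sets of the `X_n` for a large `T` give a cover
of `X` by Bowen balls of high order with `ψ(B) ≥ T - max ψ`. Its sum is at most
`Q_{ψ,T} exp (-α (T - max ψ))`, which tends to zero as `T → ∞` when `α` exceeds the pressure. -/

section Birkhoff

variable {f : X → X} {ψ : X → ℝ} {m M T : ℝ} {n : ℕ}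

lemma birkhoff_add (f : X → X) (ψ : X → ℝ) (a b : ℕ) (x : X) :
    birkhoff f ψ (a + b) x = birkhoff f ψ a x + birkhoff f ψ b (f^[a] x) :=
  birkhoffSum_add f ψ a b x

lemma birkhoff_add_const (f : X → X) (ψ : X → ℝ) (v : ℝ) (n : ℕ) (x : X) :
    birkhoff f (fun y => ψ y + v) n x = birkhoff f ψ n x + n * v := by
  simp [birkhoff, Finset.sum_add_distrib]

lemma birkhoff_nonneg (h0 : ∀ x, 0 ≤ ψ x) (n : ℕ) (x : X) : 0 ≤ birkhoff f ψ n x :=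
  Finset.sum_nonneg fun _ _ => h0 _

lemma mul_le_birkhoff (hm : ∀ x, m ≤ ψ x) (n : ℕ) (x : X) : n * m ≤ birkhoff f ψ n x := by
  simpa [birkhoff] using
    Finset.card_nsmul_le_sum (Finset.range n) (fun i => ψ (f^[i] x)) m fun i _ => hm _

lemma birkhoff_le_mul (hM : ∀ x, ψ x ≤ M) (n : ℕ) (x : X) : birkhoff f ψ n x ≤ n * M := by
  simpa [birkhoff] using
    Finset.sum_le_card_nsmul (Finset.range n) (fun i => ψ (f^[i] x)) M fun i _ => hM _

lemma birkhoff_succ_le (hM : ∀ x, ψ x ≤ M) (n : ℕ) (x : X) :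
    birkhoff f ψ (n + 1) x ≤ birkhoff f ψ n x + M := by
  rw [birkhoff_add]
  simpa using birkhoff_le_mul (f := f) hM 1 (f^[n] x)

lemma natCast_le_div_of_mem_STset (hm0 : 0 < m) (hm : ∀ x, m ≤ ψ x) (hn : n ∈ STset f ψ T) :
    (n : ℝ) ≤ T / m := by
  obtain ⟨x, hx, -⟩ := hn
  exact (le_div_iff₀ hm0).2 ((mul_le_birkhoff hm n x).trans hx)

lemma STset_subset_range (hm0 : 0 < m) (hm : ∀ x, m ≤ ψ x) :
    STset f ψ T ⊆ Finset.range (⌊T / m⌋₊ + 1) := fun n hn => by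
  have hle : n ≤ ⌊T / m⌋₊ := Nat.le_floor (natCast_le_div_of_mem_STset hm0 hm hn)
  simpa [Nat.lt_succ_iff] using hle

lemma STset_finite (hm0 : 0 < m) (hm : ∀ x, m ≤ ψ x) : (STset f ψ T).Finite :=
  (Finset.finite_toSet _).subset (STset_subset_range hm0 hm)

lemma card_STset_le (hm0 : 0 < m) (hm : ∀ x, m ≤ ψ x) (hT : 0 ≤ T)
    (hfin : (STset f ψ T).Finite) : (hfin.toFinset.card : ℝ) ≤ T / m + 1 := by
  have hcard : hfin.toFinset.card ≤ ⌊T / m⌋₊ + 1 := by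
    simpa using Finset.card_le_card (hfin.toFinset_subset.2 (STset_subset_range hm0 hm))
  calc (hfin.toFinset.card : ℝ) ≤ ⌊T / m⌋₊ + 1 := by exact_mod_cast hcard
    _ ≤ T / m + 1 := by gcongr; exact Nat.floor_le (by positivity)

lemma exists_mem_Xset (hm0 : 0 < m) (hm : ∀ x, m ≤ ψ x) (hT : 0 ≤ T) (x : X) :
    ∃ n, x ∈ Xset f ψ T n := by
  have hexceed : ∃ k, T < birkhoff f ψ k x := by
    obtain ⟨k, hk⟩ := exists_nat_gt (T / m)
    exact ⟨k, ((div_lt_iff₀ hm0).1 hk).trans_le (mul_le_birkhoff hm k x)⟩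
  have hzero : ¬T < birkhoff f ψ 0 x := by simpa [birkhoff] using hT
  obtain ⟨n, hn, hn'⟩ := Nat.exists_not_and_succ_of_not_zero_of_exists hzero hexceed
  exact ⟨n, not_lt.1 hn, hn'⟩

lemma le_of_mem_Xset (hM0 : 0 < M) (hM : ∀ x, ψ x ≤ M) {N : ℕ} (hTN : N * M ≤ T) {x : X}
    (hx : x ∈ Xset f ψ T n) : N ≤ n := by
  have hlt : (N : ℝ) * M < (n + 1 : ℕ) * M :=
    (hTN.trans_lt hx.2).trans_le (birkhoff_le_mul hM _ x)
  exact Nat.lt_succ_iff.1 (by exact_mod_cast lt_of_mul_lt_mul_right hlt hM0.le)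

end Birkhoff

section BowenCovers

variable [MetricSpace X] {f : X → X} {ψ : X → ℝ} {n : ℕ} {δ ε : ℝ} {Z : Set X} {c : ℝ}

lemma dist_iterate_le_dynDist {i : ℕ} (hi : i < n) (x y : X) :
    dist (f^[i] x) (f^[i] y) ≤ dynDist f n x y :=
  le_ciSup (f := fun i : Fin n => dist (f^[(i : ℕ)] x) (f^[(i : ℕ)] y))
    (Set.finite_range _).bddAbove ⟨i, hi⟩

lemma mem_bowenBall_self (n : ℕ) (x : X) (hε : 0 < ε) : x ∈ BowenBall f n x ε :=
  (Real.iSup_le (fun _ => (dist_self _).le) le_rfl).trans_lt hε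

/-- The set `u` has diameter at most `δ` in the `n`-th Bowen metric. Spelling this out along orbits
makes it hold for every `u` when `n = 0`, whatever the sign of `δ`. -/
def BowenDiamLE (f : X → X) (n : ℕ) (δ : ℝ) (u : Set X) : Prop :=
  ∀ x ∈ u, ∀ y ∈ u, ∀ i < n, dist (f^[i] x) (f^[i] y) ≤ δ

/-- The set `Z` is covered by at most `c` sets of diameter at most `δ` in the `n`-th Bowen metric.
The bound `c` is real, so that exponential estimates apply without rounding. -/
def HasBowenCover (f : X → X) (n : ℕ) (δ : ℝ) (Z : Set X) (c : ℝ) : Prop :=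
  ∃ U : Finset (Set X), (U.card : ℝ) ≤ c ∧ Z ⊆ ⋃ u ∈ U, u ∧ ∀ u ∈ U, BowenDiamLE f n δ u

lemma bowenDiamLE_bowenBall (f : X → X) (n : ℕ) (x : X) (ε : ℝ) :
    BowenDiamLE f n (2 * ε) (BowenBall f n x ε) := by
  intro y hy z hz i hi
  have hxy := (dist_iterate_le_dynDist hi x y).trans_lt hy
  have hxz := (dist_iterate_le_dynDist hi x z).trans_lt hz
  linarith [dist_triangle_left (f^[i] y) (f^[i] z) (f^[i] x)]

lemma BowenDiamLE.inter_preimage {a b : ℕ} {u w : Set X} (hu : BowenDiamLE f a δ u)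
    (hw : BowenDiamLE f b δ w) : BowenDiamLE f (a + b) δ (u ∩ f^[a] ⁻¹' w) := by
  intro x hx y hy i hi
  rcases lt_or_ge i a with hia | hai
  · exact hu x hx.1 y hy.1 i hia
  · obtain ⟨j, rfl⟩ := Nat.exists_eq_add_of_le' hai
    rw [Function.iterate_add_apply, Function.iterate_add_apply]
    exact hw _ hx.2 _ hy.2 j (by lia)

lemma BowenDiamLE.birkhoff_le {u : Set X} {v : ℝ} (hu : BowenDiamLE f n δ u)
    (hv : ∀ a b, dist a b ≤ δ → ψ a ≤ ψ b + v) {x y : X} (hx : x ∈ u) (hy : y ∈ u) :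
    birkhoff f ψ n x ≤ birkhoff f (fun z => ψ z + v) n y :=
  Finset.sum_le_sum fun i hi => hv _ _ (hu x hx y hy i (Finset.mem_range.1 hi))

namespace HasBowenCover

lemma mono {Z' : Set X} {δ' c' : ℝ} (h : HasBowenCover f n δ Z c) (hZ : Z' ⊆ Z) (hδ : δ ≤ δ')
    (hc : c ≤ c') : HasBowenCover f n δ' Z' c' := by
  obtain ⟨U, hcard, hcov, hdiam⟩ := h
  exact ⟨U, hcard.trans hc, hZ.trans hcov,
    fun u hu x hx y hy i hi => (hdiam u hu x hx y hy i hi).trans hδ⟩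

lemma of_bowenDiamLE (h : BowenDiamLE f n δ Z) (hc : 1 ≤ c) : HasBowenCover f n δ Z c :=
  ⟨{Z}, by simpa using hc, by simp, by simpa using h⟩

lemma empty (hc : 0 ≤ c) : HasBowenCover f n δ ∅ c :=
  ⟨∅, by simpa using hc, by simp, by simp⟩

lemma biUnion {ι : Type*} {G : Finset ι} {Z : ι → Set X} {c : ι → ℝ}
    (h : ∀ p ∈ G, HasBowenCover f n δ (Z p) (c p)) :
    HasBowenCover f n δ (⋃ p ∈ G, Z p) (∑ p ∈ G, c p) := by
  classical
  choose! U hcard hcov hdiam using h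
  refine ⟨G.biUnion U, ?_, ?_, ?_⟩
  · calc ((G.biUnion U).card : ℝ) ≤ ∑ p ∈ G, ((U p).card : ℝ) := by
          exact_mod_cast Finset.card_biUnion_le
      _ ≤ ∑ p ∈ G, c p := Finset.sum_le_sum hcard
  · rw [Finset.set_biUnion_biUnion]
    exact iUnion₂_mono hcov
  · intro u hu
    obtain ⟨p, hp, hup⟩ := Finset.mem_biUnion.1 hu
    exact hdiam p hp u hup

lemma inter_preimage {a b : ℕ} {u : Set X} (hu : BowenDiamLE f a δ u)
    (h : HasBowenCover f b δ Z c) : HasBowenCover f (a + b) δ (u ∩ f^[a] ⁻¹' Z) c := by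
  classical
  obtain ⟨U, hcard, hcov, hdiam⟩ := h
  refine ⟨U.image fun w => u ∩ f^[a] ⁻¹' w,
    (Nat.cast_le.2 Finset.card_image_le).trans hcard, ?_, ?_⟩
  · rintro x ⟨hxu, hxZ⟩
    obtain ⟨w, hw, hxw⟩ := mem_iUnion₂.1 (hcov hxZ)
    exact mem_iUnion₂.2 ⟨_, Finset.mem_image_of_mem _ hw, hxu, hxw⟩
  · intro _ hpiece
    obtain ⟨w, hw, rfl⟩ := Finset.mem_image.1 hpiece
    exact hu.inter_preimage (hdiam w hw)

lemma exists_isSpanningSet [Nonempty X] (h : HasBowenCover f n δ Z c) (hδ : 0 ≤ δ) :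
    ∃ F : Finset X, (F.card : ℝ) ≤ c ∧ IsSpanningSet f n δ Z F := by
  classical
  obtain ⟨U, hcard, hcov, hdiam⟩ := h
  have hpoint : ∀ u : Set X, u.Nonempty → ∃ x, x ∈ u := fun _ hu => hu
  choose! point hpoint using hpoint
  refine ⟨U.image point, (Nat.cast_le.2 Finset.card_image_le).trans hcard, fun y hy => ?_⟩
  obtain ⟨u, hu, hyu⟩ := mem_iUnion₂.1 (hcov hy)
  exact ⟨point u, Finset.mem_image_of_mem _ hu,
    Real.iSup_le (fun i => hdiam u hu _ (hpoint u ⟨y, hyu⟩) y hyu i i.2) hδ⟩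

/-- An orbit that starts in `B p` spends `w p` of the budget `T` during its first `k p` steps, so by
induction `∑ p, exp (α * (T - w p + C)) ≤ exp (α * (T + C))` pieces suffice. -/
lemma sublevel_birkhoff {ι : Type*} {G : Finset ι} {k : ι → ℕ} {B : ι → Set X} {w : ι → ℝ}
    {α C : ℝ} (h0 : ∀ x, 0 ≤ ψ x) (hα : 0 ≤ α) (hk : ∀ p ∈ G, 0 < k p)
    (hcov : univ ⊆ ⋃ p ∈ G, B p) (hB : ∀ p ∈ G, BowenDiamLE f (k p) δ (B p))
    (hw : ∀ p ∈ G, ∀ x ∈ B p, w p ≤ birkhoff f ψ (k p) x) (hC : ∀ p ∈ G, w p ≤ C)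
    (hsum : ∑ p ∈ G, Real.exp (-α * w p) ≤ 1) (n : ℕ) (T : ℝ) :
    HasBowenCover f n δ {x | birkhoff f ψ n x ≤ T} (Real.exp (α * (T + C))) := by
  induction n using Nat.strong_induction_on generalizing T with
  | _ n ih =>
  rcases lt_or_ge T 0 with hT | hT
  · exact (empty (Real.exp_pos _).le).mono
      (fun x hx => absurd (hx.trans_lt hT) (birkhoff_nonneg h0 n x).not_gt) le_rfl le_rfl
  have hpiece : ∀ p ∈ G, HasBowenCover f n δ (B p ∩ {x | birkhoff f ψ n x ≤ T})
      (Real.exp (α * (T + C)) * Real.exp (-α * w p)) := by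
    intro p hp
    have hexp : Real.exp (α * (T + C)) * Real.exp (-α * w p) =
        Real.exp (α * (T - w p + C)) := by
      rw [← Real.exp_add]
      ring_nf
    rw [hexp]
    rcases le_or_gt n (k p) with hnk | hkn
    · exact of_bowenDiamLE
        (fun x hx y hy i hi => hB p hp x hx.1 y hy.1 i (hi.trans_le hnk))
        (Real.one_le_exp (mul_nonneg hα (by linarith [hC p hp])))
    · obtain ⟨j, rfl⟩ := Nat.exists_eq_add_of_le hkn.le
      refine ((ih j (by have := hk p hp; lia) (T - w p)).inter_preimage (hB p hp)).mono
        (fun x hx => ⟨hx.1, ?_⟩) le_rfl le_rfl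
      have hxT := hx.2
      rw [mem_ofPred_eq, birkhoff_add] at hxT
      have hwx := hw p hp x hx.1
      simp only [mem_preimage, mem_ofPred_eq]
      linarith
  refine (biUnion hpiece).mono (fun x hx => ?_) le_rfl ?_
  · obtain ⟨p, hp, hxp⟩ := mem_iUnion₂.1 (hcov (mem_univ x))
    exact mem_iUnion₂.2 ⟨p, hp, hxp, hx⟩
  · rw [← Finset.mul_sum]
    exact mul_le_of_le_one_right (Real.exp_pos _).le hsum

end HasBowenCover

lemma exists_hasBowenCover_pow [Nonempty X] (hX : TotallyBounded (univ : Set X)) (f : X → X)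
    (hδ : 0 < δ) : ∃ c : ℝ, 1 ≤ c ∧ ∀ n, HasBowenCover f n δ univ (c ^ n) := by
  obtain ⟨t, htfin, ht⟩ := Metric.totallyBounded_iff.1 hX (δ / 2) (half_pos hδ)
  lift t to Finset X using htfin
  have htne : t.Nonempty := by
    obtain ⟨x⟩ := ‹Nonempty X›
    obtain ⟨y, hy, -⟩ := mem_iUnion₂.1 (ht (mem_univ x))
    exact ⟨y, hy⟩
  refine ⟨t.card, by exact_mod_cast htne.card_pos, fun n => ?_⟩
  induction n with
  | zero => exact .of_bowenDiamLE (fun _ _ _ _ _ hi => absurd hi (Nat.not_lt_zero _)) (by simp)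
  | succ n ih =>
    have hball : ∀ x ∈ t, BowenDiamLE f 1 δ (Metric.ball x (δ / 2)) := by
      intro x _ y hy z hz i hi
      obtain rfl : i = 0 := Nat.lt_one_iff.1 hi
      have hyz := dist_triangle_right y z x
      rw [Metric.mem_ball] at hy hz
      simp only [Function.iterate_zero, id_eq]
      linarith
    rw [add_comm]
    refine (HasBowenCover.biUnion fun x hx => ih.inter_preimage (hball x hx)).mono ?_ le_rfl ?_
    · simpa using ht
    · simp [pow_add]

lemma exists_isSpanningSet [Nonempty X] (hX : TotallyBounded (univ : Set X)) (f : X → X) (n : ℕ)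
    (hε : 0 < ε) (Z : Set X) : ∃ F : Finset X, IsSpanningSet f n ε Z F := by
  obtain ⟨c, -, hc⟩ := exists_hasBowenCover_pow hX f hε
  obtain ⟨F, -, hF⟩ := (hc n).exists_isSpanningSet hε.le
  exact ⟨F, fun y _ => hF y (mem_univ y)⟩

end BowenCovers

section InducedPressure

variable [MetricSpace X] {f : X → X} {ψ : X → ℝ} {m T ε : ℝ}

/-- The `ψ`-induced topological pressure of `φ` at scale `ε`; `inducedPressure` is its supremum
over `ε > 0`. -/
noncomputable def inducedPressureAt (f : X → X) (φ ψ : X → ℝ) (ε : ℝ) : EReal :=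
  limsup (fun T : ℝ => ((T⁻¹ * Real.log (Qspan f φ ψ T ε) : ℝ) : EReal)) atTop

lemma Qspan_zero_eq_sInf_sum_card (ε : ℝ) (hfin : (STset f ψ T).Finite) :
    Qspan f (fun _ => 0) ψ T ε = sInf {r : ℝ | ∃ F : ℕ → Finset X,
      (∀ n ∈ STset f ψ T, IsSpanningSet f n ε (Xset f ψ T n) (F n)) ∧
      r = ∑ n ∈ hfin.toFinset, ((F n).card : ℝ)} := by
  have htsum (F : ℕ → Finset X) : ∑' n, (STset f ψ T).indicator
      (fun n => ∑ x ∈ F n, Real.exp (birkhoff f (fun _ => 0) n x)) n =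
        ∑ n ∈ hfin.toFinset, ((F n).card : ℝ) := by
    simp only [birkhoff, Finset.sum_const_zero, Real.exp_zero, Finset.sum_const, nsmul_one]
    rw [sum_eq_tsum_indicator, hfin.coe_toFinset]
  simp only [Qspan, htsum]

lemma Qspan_zero_le_sum_card (hfin : (STset f ψ T).Finite) (F : ℕ → Finset X)
    (hF : ∀ n ∈ STset f ψ T, IsSpanningSet f n ε (Xset f ψ T n) (F n)) :
    Qspan f (fun _ => 0) ψ T ε ≤ ∑ n ∈ hfin.toFinset, ((F n).card : ℝ) := by
  rw [Qspan_zero_eq_sInf_sum_card ε hfin]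
  refine csInf_le ⟨0, ?_⟩ ⟨F, hF, rfl⟩
  rintro _ ⟨F, -, rfl⟩
  positivity

lemma exists_sum_card_lt_of_Qspan_zero_lt [Nonempty X] (hX : TotallyBounded (univ : Set X))
    (hε : 0 < ε) (hfin : (STset f ψ T).Finite) {c : ℝ} (h : Qspan f (fun _ => 0) ψ T ε < c) :
    ∃ F : ℕ → Finset X, (∀ n ∈ STset f ψ T, IsSpanningSet f n ε (Xset f ψ T n) (F n)) ∧
      ∑ n ∈ hfin.toFinset, ((F n).card : ℝ) < c := by
  choose F₀ hF₀ using fun n => exists_isSpanningSet hX f n hε (Xset f ψ T n)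
  rw [Qspan_zero_eq_sInf_sum_card ε hfin] at h
  obtain ⟨_, ⟨F, hF, rfl⟩, hFc⟩ :=
    exists_lt_of_csInf_lt (by exact ⟨_, F₀, fun n _ => hF₀ n, rfl⟩) h
  exact ⟨F, hF, hFc⟩

lemma one_le_Qspan_zero [Nonempty X] (hX : TotallyBounded (univ : Set X)) (hε : 0 < ε)
    (hm0 : 0 < m) (hm : ∀ x, m ≤ ψ x) (hT : 0 ≤ T) : 1 ≤ Qspan f (fun _ => 0) ψ T ε := by
  by_contra! hlt
  obtain ⟨F, hF, hF1⟩ := exists_sum_card_lt_of_Qspan_zero_lt hX hε (STset_finite hm0 hm) hlt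
  obtain ⟨x⟩ := ‹Nonempty X›
  obtain ⟨n, hn⟩ := exists_mem_Xset (f := f) hm0 hm hT x
  have hnS : n ∈ STset f ψ T := ⟨x, hn⟩
  obtain ⟨y, hy, -⟩ := hF n hnS x hn
  have hFn : (1 : ℝ) ≤ (F n).card := by exact_mod_cast Finset.card_pos.2 ⟨y, hy⟩
  have hle := Finset.single_le_sum (f := fun n => ((F n).card : ℝ))
    (fun _ _ => Nat.cast_nonneg _) ((STset_finite hm0 hm).mem_toFinset.2 hnS)
  exact (hFn.trans hle).not_gt hF1

lemma inducedPressureAt_zero_nonneg [Nonempty X] (hX : TotallyBounded (univ : Set X))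
    (hε : 0 < ε) (hm0 : 0 < m) (hm : ∀ x, m ≤ ψ x) :
    0 ≤ inducedPressureAt f (fun _ => 0) ψ ε := by
  refine le_limsup_of_frequently_le (Eventually.frequently ?_)
  filter_upwards [eventually_ge_atTop 0] with T hT
  exact EReal.coe_nonneg.2 (mul_nonneg (inv_nonneg.2 hT)
    (Real.log_nonneg (one_le_Qspan_zero hX hε hm0 hm hT)))

lemma Qspan_zero_le_of_hasBowenCover [Nonempty X] (hm0 : 0 < m) (hm : ∀ x, m ≤ ψ x)
    (hT : 0 ≤ T) (hε : 0 ≤ ε) {c : ℝ} (hc : 0 ≤ c)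
    (h : ∀ n ∈ STset f ψ T, HasBowenCover f n ε (Xset f ψ T n) c) :
    Qspan f (fun _ => 0) ψ T ε ≤ (T / m + 1) * c := by
  have hfin : (STset f ψ T).Finite := STset_finite hm0 hm
  choose! F hcard hspan using fun n hn => (h n hn).exists_isSpanningSet hε
  calc Qspan f (fun _ => 0) ψ T ε ≤ ∑ n ∈ hfin.toFinset, ((F n).card : ℝ) :=
        Qspan_zero_le_sum_card hfin F hspan
    _ ≤ hfin.toFinset.card • c :=
        Finset.sum_le_card_nsmul _ _ c fun n hn => hcard n (hfin.mem_toFinset.1 hn)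
    _ ≤ (T / m + 1) * c := by
        rw [nsmul_eq_mul]
        exact mul_le_mul_of_nonneg_right (card_STset_le hm0 hm hT hfin) hc

lemma tendsto_inv_mul_log_add_linear (hm0 : 0 < m) (a C : ℝ) :
    Tendsto (fun T : ℝ => T⁻¹ * (Real.log (T / m + 1) + (a * T + C))) atTop (𝓝 a) := by
  have hlog : Tendsto (fun T : ℝ => Real.log (T / m + 1) / T) atTop (𝓝 0) := by
    have hlin : Tendsto (fun T : ℝ => T / m + 1) atTop atTop :=
      tendsto_atTop_add_const_right _ _ (tendsto_id.atTop_div_const hm0)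
    refine ((Real.tendsto_pow_log_div_mul_add_atTop m (-m) 1 hm0.ne').comp hlin).congr fun T => ?_
    have hT : m * (T / m + 1) + -m = T := by field_simp; ring
    simp only [Function.comp_apply, pow_one, hT]
  have hconst : Tendsto (fun T : ℝ => T⁻¹ * C) atTop (𝓝 0) := by
    simpa using tendsto_inv_atTop_zero.mul_const C
  have hsum := (hlog.add hconst).add_const a
  rw [add_zero, zero_add] at hsum
  refine hsum.congr' ?_
  filter_upwards [eventually_ne_atTop 0] with T hT
  field_simp
  ring

lemma inducedPressureAt_zero_le_of_hasBowenCover [Nonempty X]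
    (hX : TotallyBounded (univ : Set X)) (hε : 0 < ε) (hm0 : 0 < m) (hm : ∀ x, m ≤ ψ x)
    {a C : ℝ} (h : ∀ T, ∀ n ∈ STset f ψ T,
      HasBowenCover f n ε (Xset f ψ T n) (Real.exp (a * T + C))) :
    inducedPressureAt f (fun _ => 0) ψ ε ≤ (a : EReal) := by
  have hlim := (continuous_coe_real_ereal.tendsto a).comp (tendsto_inv_mul_log_add_linear hm0 a C)
  refine (limsup_le_limsup ?_).trans_eq hlim.limsup_eq
  filter_upwards [eventually_ge_atTop 0] with T hT
  have hQ := Qspan_zero_le_of_hasBowenCover hm0 hm hT hε.le (Real.exp_pos _).le (h T)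
  have hlog := Real.log_le_log (one_pos.trans_le (one_le_Qspan_zero hX hε hm0 hm hT)) hQ
  rw [Real.log_mul (by positivity) (Real.exp_pos _).ne', Real.log_exp] at hlog
  exact EReal.coe_le_coe (mul_le_mul_of_nonneg_left hlog (inv_nonneg.2 hT))

lemma inducedPressureAt_zero_lt_top [Nonempty X] (hX : TotallyBounded (univ : Set X))
    (f : X → X) (hε : 0 < ε) (hm0 : 0 < m) (hm : ∀ x, m ≤ ψ x) :
    inducedPressureAt f (fun _ => 0) ψ ε < ⊤ := by
  obtain ⟨c, hc1, hc⟩ := exists_hasBowenCover_pow hX f hε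
  refine (inducedPressureAt_zero_le_of_hasBowenCover (a := Real.log c / m) (C := 0) hX hε hm0 hm
    fun T n hn => (hc n).mono (subset_univ _) le_rfl ?_).trans_lt (EReal.coe_lt_top _)
  calc c ^ n = Real.exp (Real.log c * n) := by
        rw [mul_comm, Real.exp_nat_mul, Real.exp_log (one_pos.trans_le hc1)]
    _ ≤ Real.exp (Real.log c / m * T + 0) := by
        rw [add_zero, div_mul_eq_mul_div, mul_div_assoc, Real.exp_le_exp]
        exact mul_le_mul_of_nonneg_left (natCast_le_div_of_mem_STset hm0 hm hn)
          (Real.log_nonneg hc1)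

end InducedPressure

section BallCovers

variable [MetricSpace X] {f : X → X} {ψ : X → ℝ} {α ε : ℝ} {N : ℕ} {G : Finset (ℕ × X)}

/-- The finite set `G` of pairs `(n, x)` is admissible in the infimum defining `M(α,ε,N)`: the
Bowen balls `B_n(x,ε)` cover `X` and have order at least `N`. -/
def IsBallCover (f : X → X) (ε : ℝ) (N : ℕ) (G : Finset (ℕ × X)) : Prop :=
  (∀ p ∈ G, N ≤ p.1) ∧ univ ⊆ ⋃ p ∈ G, BowenBall f p.1 p.2 ε

/-- The supremum `ψ(B)` of `S_n ψ` over the Bowen ball `B = B_n(x,ε)`, where `p = (n, x)`. -/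
noncomputable def ballWeight (f : X → X) (ψ : X → ℝ) (ε : ℝ) (p : ℕ × X) : ℝ :=
  sSup (birkhoff f ψ p.1 '' BowenBall f p.1 p.2 ε)

lemma ballWeight_nonneg (h0 : ∀ x, 0 ≤ ψ x) (p : ℕ × X) : 0 ≤ ballWeight f ψ ε p :=
  Real.sSup_nonneg (by rintro _ ⟨y, -, rfl⟩; exact birkhoff_nonneg h0 _ y)

lemma birkhoff_le_ballWeight {M : ℝ} (hM : ∀ x, ψ x ≤ M) {p : ℕ × X} {y : X}
    (hy : y ∈ BowenBall f p.1 p.2 ε) : birkhoff f ψ p.1 y ≤ ballWeight f ψ ε p := by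
  refine le_csSup ⟨p.1 * M, ?_⟩ (mem_image_of_mem _ hy)
  rintro _ ⟨z, -, rfl⟩
  exact birkhoff_le_mul hM _ z

lemma ballWeight_le_birkhoff {v : ℝ} (hε : 0 < ε)
    (hv : ∀ a b, dist a b ≤ 2 * ε → ψ a ≤ ψ b + v) {p : ℕ × X} {y : X}
    (hy : y ∈ BowenBall f p.1 p.2 ε) :
    ballWeight f ψ ε p ≤ birkhoff f (fun x => ψ x + v) p.1 y := by
  refine csSup_le ⟨_, mem_image_of_mem _ (mem_bowenBall_self _ _ hε)⟩ ?_
  rintro _ ⟨x, hx, rfl⟩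
  exact (bowenDiamLE_bowenBall f p.1 p.2 ε).birkhoff_le hv hx hy

lemma BSpre_eq_iInf_ofReal_sum :
    BSpre f ψ α ε N = ⨅ (G : Finset (ℕ × X)) (_ : IsBallCover f ε N G),
      ENNReal.ofReal (∑ p ∈ G, Real.exp (-α * ballWeight f ψ ε p)) := by
  simp only [ENNReal.ofReal_sum_of_nonneg fun _ _ => (Real.exp_pos _).le]
  rfl

lemma BSpre_le_of_le_ballWeight {s : ℝ} (hG : IsBallCover f ε N G) (hα : 0 ≤ α)
    (hs : ∀ p ∈ G, s ≤ ballWeight f ψ ε p) :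
    BSpre f ψ α ε N ≤ ENNReal.ofReal (G.card * Real.exp (-α * s)) := by
  rw [BSpre_eq_iInf_ofReal_sum, ← nsmul_eq_mul]
  refine (iInf₂_le G hG).trans (ENNReal.ofReal_le_ofReal ?_)
  refine Finset.sum_le_card_nsmul _ _ _ fun p hp => Real.exp_le_exp.2 ?_
  exact mul_le_mul_of_nonpos_left (hs p hp) (neg_nonpos.2 hα)

lemma exists_isBallCover_sum_lt_one (h : BSm f ψ α ε = 0) (N : ℕ) :
    ∃ G, IsBallCover f ε N G ∧ ∑ p ∈ G, Real.exp (-α * ballWeight f ψ ε p) < 1 := by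
  have hlt : BSpre f ψ α ε N < 1 := by
    rw [ENNReal.iSup_eq_zero.1 h N]
    exact one_pos
  simp only [BSpre_eq_iInf_ofReal_sum, iInf_lt_iff, ENNReal.ofReal_lt_one] at hlt
  obtain ⟨G, hG, hsum⟩ := hlt
  exact ⟨G, hG, hsum⟩

lemma nonneg_of_BSm_eq_zero [Nonempty X] (h0 : ∀ x, 0 ≤ ψ x) (h : BSm f ψ α ε = 0) : 0 ≤ α := by
  by_contra! hα
  obtain ⟨G, hG, hsum⟩ := exists_isBallCover_sum_lt_one h 0
  obtain ⟨x⟩ := ‹Nonempty X›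
  obtain ⟨p, hp, -⟩ := mem_iUnion₂.1 (hG.2 (mem_univ x))
  have hterm : 1 ≤ Real.exp (-α * ballWeight f ψ ε p) :=
    Real.one_le_exp (mul_nonneg (by linarith) (ballWeight_nonneg h0 p))
  have hle := Finset.single_le_sum (f := fun p => Real.exp (-α * ballWeight f ψ ε p))
    (fun _ _ => (Real.exp_pos _).le) hp
  exact (hterm.trans hle).not_gt hsum

lemma coe_BSdimAt_le_BSdim (f : X → X) (ψ : X → ℝ) (hε : 0 < ε) :
    (BSdimAt f ψ ε : EReal) ≤ BSdim f ψ :=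
  le_iSup₂ (f := fun (ε : ℝ) (_ : 0 < ε) => (BSdimAt f ψ ε : EReal)) ε hε

end BallCovers

section PressureLeDimension

variable [MetricSpace X] {f : X → X} {ψ : X → ℝ} {α ε ε' m v : ℝ}

lemma IsBallCover.exists_hasBowenCover_sublevel {G : Finset (ℕ × X)} (hG : IsBallCover f ε 1 G)
    (hε : 0 < ε) (hα : 0 ≤ α) (h0 : ∀ x, 0 ≤ ψ x) (hv0 : 0 ≤ v)
    (hv : ∀ a b, dist a b ≤ 2 * ε → ψ a ≤ ψ b + v)
    (hsum : ∑ p ∈ G, Real.exp (-α * ballWeight f ψ ε p) ≤ 1) :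
    ∃ C, ∀ n T, HasBowenCover f n (2 * ε) {x | birkhoff f ψ n x ≤ T}
      (Real.exp (α * (T + n * v + C))) := by
  obtain ⟨C, hC⟩ := (G.image (ballWeight f ψ ε)).exists_le
  refine ⟨C, fun n T => ?_⟩
  -- The shift by `v` absorbs the oscillation of `ψ`: `ψ(B)` is a lower bound for the Birkhoff sums
  -- of `ψ + v` on `B`.
  have hcover := HasBowenCover.sublevel_birkhoff (ψ := fun x => ψ x + v)
    (fun x => add_nonneg (h0 x) hv0) hα hG.1 hG.2
    (fun p _ => bowenDiamLE_bowenBall f p.1 p.2 ε)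
    (fun p _ x hx => ballWeight_le_birkhoff hε hv hx)
    (fun p hp => hC _ (Finset.mem_image_of_mem _ hp)) hsum n (T + n * v)
  simpa only [birkhoff_add_const, add_le_add_iff_right] using hcover

lemma inducedPressureAt_zero_le_of_BSm_eq_zero [Nonempty X] (hX : TotallyBounded (univ : Set X))
    (hε : 0 < ε) (hε' : 2 * ε ≤ ε') (hm0 : 0 < m) (hm : ∀ x, m ≤ ψ x) (hv0 : 0 ≤ v)
    (hv : ∀ a b, dist a b ≤ 2 * ε → ψ a ≤ ψ b + v) (h : BSm f ψ α ε = 0) :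
    inducedPressureAt f (fun _ => 0) ψ ε' ≤ ((α * (1 + v / m) : ℝ) : EReal) := by
  have h0 : ∀ x, 0 ≤ ψ x := fun x => hm0.le.trans (hm x)
  have hα : 0 ≤ α := nonneg_of_BSm_eq_zero h0 h
  obtain ⟨G, hG, hsum⟩ := exists_isBallCover_sum_lt_one h 1
  obtain ⟨C, hC⟩ := hG.exists_hasBowenCover_sublevel hε hα h0 hv0 hv hsum.le
  refine inducedPressureAt_zero_le_of_hasBowenCover (C := α * C) hX (by linarith) hm0 hm
    fun T n hn => (hC n T).mono (fun x hx => hx.1) hε' (Real.exp_le_exp.2 ?_)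
  calc α * (T + n * v + C) ≤ α * (T + T / m * v + C) := by
        gcongr
        exact natCast_le_div_of_mem_STset hm0 hm hn
    _ = α * (1 + v / m) * T + α * C := by ring

end PressureLeDimension

section DimensionLePressure

variable [MetricSpace X] {f : X → X} {ψ : X → ℝ} {α ε ε' m M T : ℝ}

lemma exists_cover_balls_inter_Xset (hε : ε < ε') (hm0 : 0 < m) (hm : ∀ x, m ≤ ψ x) (hT : 0 ≤ T)
    (hfin : (STset f ψ T).Finite) (F : ℕ → Finset X)
    (hF : ∀ n ∈ STset f ψ T, IsSpanningSet f n ε (Xset f ψ T n) (F n)) :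
    ∃ G : Finset (ℕ × X), (univ ⊆ ⋃ p ∈ G, BowenBall f p.1 p.2 ε') ∧
      (∀ p ∈ G, (BowenBall f p.1 p.2 ε' ∩ Xset f ψ T p.1).Nonempty) ∧
      (G.card : ℝ) ≤ ∑ n ∈ hfin.toFinset, ((F n).card : ℝ) := by
  classical
  let P : Finset (ℕ × X) := hfin.toFinset.biUnion fun n => {n} ×ˢ F n
  have hmem : ∀ n ∈ STset f ψ T, ∀ x ∈ F n, (n, x) ∈ P := by
    simp +contextual [P]
  have hcard : P.card ≤ ∑ n ∈ hfin.toFinset, (F n).card :=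
    Finset.card_biUnion_le.trans_eq (by simp)
  refine ⟨P.filter fun p => (BowenBall f p.1 p.2 ε' ∩ Xset f ψ T p.1).Nonempty, fun y _ => ?_,
    fun p hp => (Finset.mem_filter.1 hp).2,
    by exact_mod_cast (Finset.card_filter_le _ _).trans hcard⟩
  obtain ⟨n, hn⟩ := exists_mem_Xset (f := f) hm0 hm hT y
  have hnS : n ∈ STset f ψ T := ⟨y, hn⟩
  obtain ⟨x, hx, hxy⟩ := hF n hnS y hn
  have hyB : y ∈ BowenBall f n x ε' := hxy.trans_lt hε
  exact mem_iUnion₂.2 ⟨(n, x), Finset.mem_filter.2 ⟨hmem n hnS x hx, y, hyB, hn⟩, hyB⟩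

lemma BSpre_le_of_Qspan_zero_lt [Nonempty X] (hX : TotallyBounded (univ : Set X)) (hε0 : 0 < ε)
    (hε : ε < ε') (hα : 0 ≤ α) (hm0 : 0 < m) (hm : ∀ x, m ≤ ψ x) (hM0 : 0 < M)
    (hM : ∀ x, ψ x ≤ M) (hT : 0 ≤ T) {N : ℕ} (hTN : N * M ≤ T) {c : ℝ}
    (hQ : Qspan f (fun _ => 0) ψ T ε < c) :
    BSpre f ψ α ε' N ≤ ENNReal.ofReal (c * Real.exp (-α * (T - M))) := by
  obtain ⟨F, hF, hFc⟩ := exists_sum_card_lt_of_Qspan_zero_lt hX hε0 (STset_finite hm0 hm) hQ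
  obtain ⟨G, hcov, hmeet, hcard⟩ := exists_cover_balls_inter_Xset hε hm0 hm hT _ F hF
  have hG : IsBallCover f ε' N G := ⟨fun p hp => by
    obtain ⟨y, -, hy⟩ := hmeet p hp
    exact le_of_mem_Xset hM0 hM hTN hy, hcov⟩
  have hweight : ∀ p ∈ G, T - M ≤ ballWeight f ψ ε' p := fun p hp => by
    obtain ⟨y, hyB, hy⟩ := hmeet p hp
    linarith [hy.2, birkhoff_succ_le (f := f) hM p.1 y, birkhoff_le_ballWeight hM hyB]
  refine (BSpre_le_of_le_ballWeight hG hα hweight).trans (ENNReal.ofReal_le_ofReal ?_)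
  exact mul_le_mul_of_nonneg_right (hcard.trans hFc.le) (Real.exp_pos _).le

lemma tendsto_ofReal_exp_mul_exp {β : ℝ} (h : β < α) (M : ℝ) :
    Tendsto (fun T : ℝ => ENNReal.ofReal (Real.exp (β * T) * Real.exp (-α * (T - M))))
      atTop (𝓝 0) := by
  have hexponent : Tendsto (fun T : ℝ => α * M + (β - α) * T) atTop atBot :=
    tendsto_atBot_add_const_left _ _ (tendsto_id.const_mul_atTop_of_neg (by linarith))
  rw [← ENNReal.ofReal_zero]
  refine ENNReal.tendsto_ofReal ((Real.tendsto_exp_atBot.comp hexponent).congr fun T => ?_)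
  rw [← Real.exp_add, Function.comp_apply]
  ring_nf

lemma BSm_eq_zero_of_inducedPressureAt_zero_lt [Nonempty X] (hX : TotallyBounded (univ : Set X))
    (hε0 : 0 < ε) (hε : ε < ε') (hm0 : 0 < m) (hm : ∀ x, m ≤ ψ x) (hM0 : 0 < M)
    (hM : ∀ x, ψ x ≤ M) (h : inducedPressureAt f (fun _ => 0) ψ ε < (α : EReal)) :
    BSm f ψ α ε' = 0 := by
  have hα : 0 ≤ α :=
    EReal.coe_nonneg.1 ((inducedPressureAt_zero_nonneg hX hε0 hm0 hm).trans h.le)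
  obtain ⟨β, hβ, hβα⟩ := EReal.lt_iff_exists_real_btwn.1 h
  refine ENNReal.iSup_eq_zero.2 fun N => le_antisymm ?_ zero_le
  refine ge_of_tendsto (tendsto_ofReal_exp_mul_exp (EReal.coe_lt_coe_iff.1 hβα) M) ?_
  filter_upwards [eventually_lt_of_limsup_lt hβ, eventually_gt_atTop 0,
    eventually_ge_atTop (N * M)] with T hlog hT hTN
  have hQ1 := one_le_Qspan_zero (f := f) hX hε0 hm0 hm hT.le
  rw [EReal.coe_lt_coe_iff, inv_mul_lt_iff₀ hT, mul_comm,
    Real.log_lt_iff_lt_exp (one_pos.trans_le hQ1)] at hlog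
  exact BSpre_le_of_Qspan_zero_lt hX hε0 hε hα hm0 hm hM0 hM hT.le hTN hlog

lemma BSdimAt_le_inducedPressureAt_zero [Nonempty X] (hX : TotallyBounded (univ : Set X))
    (hε0 : 0 < ε) (hε : ε < ε') (hm0 : 0 < m) (hm : ∀ x, m ≤ ψ x) (hM0 : 0 < M)
    (hM : ∀ x, ψ x ≤ M) :
    (BSdimAt f ψ ε' : EReal) ≤ inducedPressureAt f (fun _ => 0) ψ ε := by
  refine EReal.le_of_forall_lt_iff_le.1 fun α hα => EReal.coe_le_coe (csInf_le ⟨0, ?_⟩ ?_)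
  · exact fun _ => nonneg_of_BSm_eq_zero fun x => hm0.le.trans (hm x)
  · exact BSm_eq_zero_of_inducedPressureAt_zero_lt hX hε0 hε hm0 hm hM0 hM hα

lemma exists_BSm_eq_zero [Nonempty X] (hX : TotallyBounded (univ : Set X)) (f : X → X)
    (hε : 0 < ε) (hm0 : 0 < m) (hm : ∀ x, m ≤ ψ x) (hM0 : 0 < M) (hM : ∀ x, ψ x ≤ M) :
    ∃ α, BSm f ψ α ε = 0 := by
  obtain ⟨α, hα, -⟩ := EReal.lt_iff_exists_real_btwn.1
    (inducedPressureAt_zero_lt_top hX f (half_pos hε) hm0 hm)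
  exact ⟨α, BSm_eq_zero_of_inducedPressureAt_zero_lt hX (half_pos hε) (half_lt_self hε) hm0 hm
    hM0 hM hα⟩

end DimensionLePressure

section Equality

variable [MetricSpace X] {ψ : X → ℝ} {ε m M : ℝ}

lemma exists_pos_le_forall_dist_le (hψ : UniformContinuous ψ) {r v : ℝ} (hr : 0 < r)
    (hv : 0 < v) :
    ∃ ρ > 0, 2 * ρ ≤ r ∧ ∀ a b, dist a b ≤ 2 * ρ → ψ a ≤ ψ b + v := by
  obtain ⟨δ, hδ, hψδ⟩ := Metric.uniformContinuous_iff_le.1 hψ v hv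
  refine ⟨min r δ / 2, by positivity, by linarith [min_le_left r δ], fun a b hab => ?_⟩
  have hdist := hψδ (hab.trans (by linarith [min_le_right r δ]))
  linarith [(abs_le.1 hdist).2]

lemma inducedPressureAt_zero_le_BSdim [Nonempty X] (hX : TotallyBounded (univ : Set X))
    (f : X → X) (hψ : UniformContinuous ψ) (hε : 0 < ε) (hm0 : 0 < m) (hm : ∀ x, m ≤ ψ x)
    (hM0 : 0 < M) (hM : ∀ x, ψ x ≤ M) :
    inducedPressureAt f (fun _ => 0) ψ ε ≤ BSdim f ψ := by
  rcases eq_or_ne (BSdim f ψ) ⊤ with htop | htop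
  · exact htop ▸ le_top
  have hbot : BSdim f ψ ≠ ⊥ :=
    ne_bot_of_le_ne_bot (EReal.coe_ne_bot _) (coe_BSdimAt_le_BSdim f ψ one_pos)
  obtain ⟨d, hd⟩ : ∃ d : ℝ, (d : EReal) = BSdim f ψ := ⟨_, EReal.coe_toReal htop hbot⟩
  have hbound : ∀ v > 0, inducedPressureAt f (fun _ => 0) ψ ε ≤
      (((d + v) * (1 + v / m) : ℝ) : EReal) := by
    intro v hv
    obtain ⟨ρ, hρ, hρε, hosc⟩ := exists_pos_le_forall_dist_le hψ hε hv
    have hdim : BSdimAt f ψ ρ < d + v := by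
      have hle := (coe_BSdimAt_le_BSdim f ψ hρ).trans_eq hd.symm
      linarith [EReal.coe_le_coe_iff.1 hle]
    obtain ⟨α, hα, hαd⟩ := exists_lt_of_csInf_lt (exists_BSm_eq_zero hX f hρ hm0 hm hM0 hM) hdim
    refine (inducedPressureAt_zero_le_of_BSm_eq_zero hX hρ hρε hm0 hm hv.le hosc hα).trans
      (EReal.coe_le_coe ?_)
    gcongr
  have hlim : Tendsto (fun v : ℝ => (((d + v) * (1 + v / m) : ℝ) : EReal)) (𝓝[>] 0) (𝓝 d) :=
    (Continuous.tendsto' (continuous_coe_real_ereal.comp (by fun_prop)) 0 _ (by simp)).mono_left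
      nhdsWithin_le_nhds
  rw [← hd]
  exact ge_of_tendsto hlim (eventually_mem_nhdsWithin.mono hbound)

lemma exists_forall_le_of_totallyBounded (hX : TotallyBounded (univ : Set X))
    (hψ : UniformContinuous ψ) : ∃ M, ∀ x, ψ x ≤ M := by
  obtain ⟨M, hM⟩ := (hX.image hψ).isBounded.bddAbove
  exact ⟨M, fun x => hM (mem_image_of_mem ψ (mem_univ x))⟩

theorem stmt13_general [Nonempty X] (hX : TotallyBounded (univ : Set X)) (f : X → X)
    (hψ : UniformContinuous ψ) (hm0 : 0 < m) (hm : ∀ x, m ≤ ψ x) :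
    inducedPressure f (fun _ => 0) ψ = BSdim f ψ := by
  obtain ⟨M, hM⟩ := exists_forall_le_of_totallyBounded hX hψ
  have x₀ := Classical.arbitrary X
  have hM0 : 0 < M := hm0.trans_le ((hm x₀).trans (hM x₀))
  refine le_antisymm (iSup₂_le fun ε hε => ?_) (iSup₂_le fun ε hε => ?_)
  · exact inducedPressureAt_zero_le_BSdim hX f hψ hε hm0 hm hM0 hM
  · exact (BSdimAt_le_inducedPressureAt_zero hX (half_pos hε) (half_lt_self hε) hm0 hm hM0
      hM).trans (le_iSup₂ (f := fun (δ : ℝ) (_ : 0 < δ) =>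
        inducedPressureAt f (fun _ => 0) ψ δ) (ε / 2) (half_pos hε))

end Equality

/-- `P_ψ(0) = dim_BS X`. -/
theorem stmt13 [MetricSpace X] [CompactSpace X] [Nonempty X]
    (f : X → X) (ψ : X → ℝ) (hf : Continuous f) (hψ : Continuous ψ)
    (hpos : ∀ x, 0 < ψ x) :
    inducedPressure f (fun _ => 0) ψ = BSdim f ψ := by
  obtain ⟨x₀, hx₀⟩ := hψ.exists_forall_le (by simp)
  exact stmt13_general isCompact_univ.totallyBounded f
    (CompactSpace.uniformContinuous_of_continuous hψ) (hpos x₀) hx₀
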